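/- (Theorem 4: Generalization vs. structure regularization.) Let the learned function f = f_S be the minimizer of the structure-regularized and L₂-weight-regularized objective f := argmin_{g∈F} [(1/(mn)) Σ_{j=1}^{mα} L_τ(g, z′_j) + (λ/2)‖g‖₂²], where the training set S of m samples of structure complexity n is drawn i.i.d. from D and decomposed (by a fixed per-sample map) into mα mini-samples of structure complexity n/α. Assume the point-wise loss ℓ_τ is convex, differentiable in g, built from a τ-smooth cost, satisfies 0 ≤ ℓ_τ(f, z, k) ≤ γ, the evaluation is ρ-admissible, and every feature value is bounded by v. Then for any δ ∈ (0,1), with probability at least 1 − δ over the random draw of S: R(f) ≤ R_e(f) + 2dτ²ρ²v²n²/(mλα) + ( (4m−2)dτ²ρ²v²n²/(mλα) + γ )·√(ln(1/δ)/(2m)). -/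

import Mathlib

open MeasureTheory
open scoped BigOperators

/-- The sample-wise loss `L_τ(g, z) = ∑_k c_τ(g(x,k), y_(k))` of `g : F` on a
sample `z = (x, y)` of structure complexity `t`, with feature vectors in
`EuclideanSpace ℝ (Fin d)`, for the evaluation `eval` and point-wise cost `cτ`. -/
noncomputable def srSampleLoss {F : Type*} (d : ℕ)
    (eval : F → (t : ℕ) → (Fin t → EuclideanSpace ℝ (Fin d)) → Fin t → ℝ)
    (cτ : ℝ → ℝ → ℝ) (t : ℕ) (g : F)
    (z : (Fin t → EuclideanSpace ℝ (Fin d)) × (Fin t → ℝ)) : ℝ :=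
  ∑ k, cτ (eval g t z.1 k) (z.2 k)

/-- The generalization risk `R(g) = E_{z∼D}[(1/n) L_τ(g, z)]`. -/
noncomputable def srGenRisk {F : Type*} (d n : ℕ)
    (eval : F → (t : ℕ) → (Fin t → EuclideanSpace ℝ (Fin d)) → Fin t → ℝ)
    (cτ : ℝ → ℝ → ℝ)
    (D : Measure ((Fin n → EuclideanSpace ℝ (Fin d)) × (Fin n → ℝ)))
    (g : F) : ℝ :=
  ∫ z, (1 / (n : ℝ)) * srSampleLoss d eval cτ n g z ∂D

/-- The empirical risk `R_e(g) = (1/(m n)) ∑_{i=1}^m L_τ(g, z_i)` on a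
training set `S` of `m` samples of structure complexity `n`. -/
noncomputable def srEmpRisk {F : Type*} (d n m : ℕ)
    (eval : F → (t : ℕ) → (Fin t → EuclideanSpace ℝ (Fin d)) → Fin t → ℝ)
    (cτ : ℝ → ℝ → ℝ) (g : F)
    (S : Fin m → (Fin n → EuclideanSpace ℝ (Fin d)) × (Fin n → ℝ)) : ℝ :=
  (1 / ((m : ℝ) * n)) * ∑ i, srSampleLoss d eval cτ n g (S i)

/-- The structure-regularized and `L₂`-weight-regularized objective
`g ↦ (1/(mn)) ∑_{j=1}^{mα} L_τ(g, z'_j) + (lam/2)‖g‖²`, where the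
mini-samples `z'_{(i,j)} = φ (S i) j` (of structure complexity `n' = n/α`)
are obtained by the fixed decomposition map `φ` from the training set `S`. -/
noncomputable def srObjective {F : Type*} [NormedAddCommGroup F] (d n n' α m : ℕ)
    (eval : F → (t : ℕ) → (Fin t → EuclideanSpace ℝ (Fin d)) → Fin t → ℝ)
    (cτ : ℝ → ℝ → ℝ) (lam : ℝ)
    (φ : (Fin n → EuclideanSpace ℝ (Fin d)) × (Fin n → ℝ) →
      Fin α → (Fin n' → EuclideanSpace ℝ (Fin d)) × (Fin n' → ℝ))
    (S : Fin m → (Fin n → EuclideanSpace ℝ (Fin d)) × (Fin n → ℝ)) (g : F) : ℝ :=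
  1 / ((m : ℝ) * n) * ∑ i : Fin m, ∑ j : Fin α, srSampleLoss d eval cτ n' g (φ (S i) j)
    + lam / 2 * ‖g‖ ^ 2

/-- The same objective with all `α` mini-sample terms derived from the `i`-th
training sample removed. -/
noncomputable def srObjectiveMinus {F : Type*} [NormedAddCommGroup F] (d n n' α m : ℕ)
    (eval : F → (t : ℕ) → (Fin t → EuclideanSpace ℝ (Fin d)) → Fin t → ℝ)
    (cτ : ℝ → ℝ → ℝ) (lam : ℝ)
    (φ : (Fin n → EuclideanSpace ℝ (Fin d)) × (Fin n → ℝ) →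
      Fin α → (Fin n' → EuclideanSpace ℝ (Fin d)) × (Fin n' → ℝ))
    (S : Fin m → (Fin n → EuclideanSpace ℝ (Fin d)) × (Fin n → ℝ)) (i : Fin m)
    (g : F) : ℝ :=
  1 / ((m : ℝ) * n) *
      ∑ i' ∈ Finset.univ.erase i, ∑ j : Fin α, srSampleLoss d eval cτ n' g (φ (S i') j)
    + lam / 2 * ‖g‖ ^ 2

/-!
The regularized objective is `lam`-strongly convex. Replacing one training sample perturbs it by a
function with Lipschitz constant `2 / (m n) * α n'² τ ρ √(d v²)`, so the minimizer moves by at most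
`1 / lam` times as much. The sample-wise loss is `n² τ ρ √(d v²)`-Lipschitz, hence the normalized
loss of the learned function moves by at most `κ = 2 d τ² ρ² v² n² / (m lam α)`.

Exchanging a training sample with an independent copy shows that the expected generalization gap is
at most `κ`, and replacing a training sample changes the gap by at most `((2 m - 1) κ + γ) / m`;
McDiarmid's inequality then gives the tail bound. Since features are bounded only almost surely,
these differences are bounded only almost everywhere. McDiarmid's inequality survives this: peel
off one coordinate, apply Hoeffding's lemma to the partial mean over the remaining ones and the
induction hypothesis to the sections, and multiply the moment generating functions by Fubini.
-/

section BoundedDifferences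

open ProbabilityTheory
open scoped NNReal

lemma ofReal_one_sub_le_measure_of_hasSubgaussianMGF {Ω : Type*} [MeasurableSpace Ω]
    {μ : Measure Ω} [IsProbabilityMeasure μ] {X : Ω → ℝ} {c : ℝ≥0}
    (hX : HasSubgaussianMGF X c μ) {δ : ℝ} (hδ₀ : 0 < δ) (hδ₁ : δ ≤ 1) :
    ENNReal.ofReal (1 - δ) ≤ μ {ω | X ω ≤ √(2 * c * Real.log δ⁻¹)} := by
  rcases eq_or_ne c 0 with rfl | hc
  · have hX₀ : ∀ᵐ ω ∂μ, X ω ≤ √(2 * (0 : ℝ≥0) * Real.log δ⁻¹) := by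
      filter_upwards [hX.ae_eq_zero_of_hasSubgaussianMGF_zero] with ω hω
      simp [hω]
    calc ENNReal.ofReal (1 - δ) ≤ μ Set.univ := by
          simpa only [measure_univ] using ENNReal.ofReal_le_one.2 (by linarith)
      _ = μ {ω | X ω ≤ √(2 * (0 : ℝ≥0) * Real.log δ⁻¹)} :=
          measure_congr (Filter.eventuallyEq_univ.2 hX₀).symm
  set ε := √(2 * c * Real.log δ⁻¹) with hε
  have hlog : 0 ≤ Real.log δ⁻¹ := Real.log_nonneg ((one_le_inv₀ hδ₀).2 hδ₁)
  have hexp : Real.exp (-ε ^ 2 / (2 * c)) = δ := by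
    rw [hε, Real.sq_sqrt (by positivity), Real.log_inv]
    have : -(2 * c * -Real.log δ) / (2 * c) = Real.log δ := by field_simp
    rw [this, Real.exp_log hδ₀]
  have htail : μ.real {ω | ε ≤ X ω} ≤ δ := hexp ▸ hX.measure_ge_le (Real.sqrt_nonneg _)
  have hcover : 1 ≤ μ.real {ω | X ω ≤ ε} + μ.real {ω | ε ≤ X ω} := by
    rw [← probReal_univ (μ := μ)]
    refine (measureReal_mono fun ω _ ↦ ?_).trans (measureReal_union_le _ _)
    exact le_total (X ω) ε
  rw [← ofReal_measureReal]
  exact ENNReal.ofReal_le_ofReal (by linarith)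

lemma hasSubgaussianMGF_sub_integral_of_ae_abs_sub_le {Ω : Type*} [MeasurableSpace Ω]
    {μ : Measure Ω} [IsProbabilityMeasure μ] {X : Ω → ℝ} (hX : AEMeasurable X μ) {c : ℝ≥0}
    (hosc : ∀ᵐ ω ∂μ, ∀ᵐ ω' ∂μ, |X ω' - X ω| ≤ c) :
    HasSubgaussianMGF (fun ω ↦ X ω - ∫ ω, X ω ∂μ) ((c / 2) ^ 2) μ := by
  obtain ⟨ω₀, hω₀⟩ := hosc.exists
  have hbdd : (ae μ).IsBoundedUnder (· ≥ ·) X :=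
    ⟨X ω₀ - c, Filter.eventually_map.2 <| by
      filter_upwards [hω₀] with ω hω
      linarith [(abs_le.1 hω).1]⟩
  have hcobdd : (ae μ).IsCoboundedUnder (· ≥ ·) X := by
    refine Filter.IsBoundedUnder.isCoboundedUnder_ge ⟨X ω₀ + c, Filter.eventually_map.2 ?_⟩
    filter_upwards [hω₀] with ω hω
    linarith [(abs_le.1 hω).2]
  have hmem : ∀ᵐ ω ∂μ, X ω ∈ Set.Icc (essInf X μ) (essInf X μ + c) := by
    filter_upwards [ae_essInf_le hbdd, hosc] with ω hinf hω
    have hle : X ω - c ≤ essInf X μ := by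
      refine le_essInf_of_ae_le _ ?_ hcobdd
      filter_upwards [hω] with ω' hω'
      linarith [(abs_le.1 hω').1]
    exact ⟨hinf, by linarith⟩
  simpa using hasSubgaussianMGF_of_mem_Icc hX hmem

section Product

variable {A B : Type*} [MeasurableSpace A] [MeasurableSpace B] {μ : Measure A} {ν : Measure B}

lemma hasSubgaussianMGF_add_prod [SFinite μ] [SFinite ν] {X : A → ℝ} {Y : A × B → ℝ} {cX cY : ℝ≥0}
    (hX : HasSubgaussianMGF X cX μ) (hYm : AEStronglyMeasurable Y (μ.prod ν))
    (hY : ∀ᵐ a ∂μ, HasSubgaussianMGF (fun b ↦ Y (a, b)) cY ν) :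
    HasSubgaussianMGF (fun p ↦ X p.1 + Y p) (cX + cY) (μ.prod ν) := by
  have hsection (t : ℝ) : ∀ᵐ a ∂μ, ∫ b, Real.exp (t * (X a + Y (a, b))) ∂ν
      ≤ Real.exp (t * X a) * Real.exp (cY * t ^ 2 / 2) := by
    filter_upwards [hY] with a ha
    simp only [mul_add, Real.exp_add, integral_const_mul]
    gcongr
    exact ha.mgf_le t
  have hmeas (t : ℝ) :
      AEStronglyMeasurable (fun p ↦ Real.exp (t * (X p.1 + Y p))) (μ.prod ν) :=
    Real.continuous_exp.comp_aestronglyMeasurable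
      ((hX.aestronglyMeasurable.comp_fst.add hYm).const_mul t)
  have hint (t : ℝ) : Integrable (fun p ↦ Real.exp (t * (X p.1 + Y p))) (μ.prod ν) := by
    refine (integrable_prod_iff (hmeas t)).2 ⟨?_, ?_⟩
    · filter_upwards [hY] with a ha
      simp only [mul_add, Real.exp_add]
      exact (ha.integrable_exp_mul t).const_mul _
    · refine ((hX.integrable_exp_mul t).mul_const (Real.exp (cY * t ^ 2 / 2))).mono'
        (hmeas t).norm.integral_prod_right' ?_
      filter_upwards [hsection t] with a ha
      rw [Real.norm_of_nonneg (integral_nonneg fun _ ↦ norm_nonneg _)]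
      simpa only [Real.norm_eq_abs, Real.abs_exp] using ha
  refine ⟨hint, fun t ↦ ?_⟩
  calc ∫ p, Real.exp (t * (X p.1 + Y p)) ∂μ.prod ν
      = ∫ a, ∫ b, Real.exp (t * (X a + Y (a, b))) ∂ν ∂μ := integral_prod _ (hint t)
    _ ≤ ∫ a, Real.exp (t * X a) * Real.exp (cY * t ^ 2 / 2) ∂μ :=
        integral_mono_ae (hint t).integral_prod_left
          ((hX.integrable_exp_mul t).mul_const _) (hsection t)
    _ = mgf X μ t * Real.exp (cY * t ^ 2 / 2) := integral_mul_const _ _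
    _ ≤ Real.exp (cX * t ^ 2 / 2) * Real.exp (cY * t ^ 2 / 2) := by
        gcongr
        exact hX.mgf_le t
    _ = Real.exp (↑(cX + cY) * t ^ 2 / 2) := by
        rw [← Real.exp_add, NNReal.coe_add]
        ring_nf

lemma ae_abs_integral_section_sub_le [SFinite μ] [IsProbabilityMeasure ν] {Ψ : A × B → ℝ}
    (hΨ : Integrable Ψ (μ.prod ν)) {c : ℝ}
    (hosc : ∀ᵐ p ∂(μ.prod ν).prod μ, |Ψ (p.2, p.1.2) - Ψ p.1| ≤ c) :
    ∀ᵐ a ∂μ, ∀ᵐ a' ∂μ, |∫ b, Ψ (a', b) ∂ν - ∫ b, Ψ (a, b) ∂ν| ≤ c := by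
  have hassoc := (measurePreserving_prodAssoc μ ν μ).symm.quasiMeasurePreserving.ae hosc
  filter_upwards [Measure.ae_ae_of_ae_prod hassoc, hΨ.prod_right_ae] with a ha hint
  have hswap := Measure.measurePreserving_swap.quasiMeasurePreserving.ae ha
  filter_upwards [Measure.ae_ae_of_ae_prod hswap, hΨ.prod_right_ae] with a' ha' hint'
  have hle : ∀ᵐ b ∂ν, ‖Ψ (a', b) - Ψ (a, b)‖ ≤ c := ha'
  rw [← integral_sub hint' hint]
  simpa using norm_integral_le_of_norm_le_const hle

lemma hasSubgaussianMGF_sub_integral_prod [IsProbabilityMeasure μ] [IsProbabilityMeasure ν]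
    {Ψ : A × B → ℝ} (hΨ : Integrable Ψ (μ.prod ν)) {c C : ℝ≥0}
    (hosc : ∀ᵐ p ∂(μ.prod ν).prod μ, |Ψ (p.2, p.1.2) - Ψ p.1| ≤ c)
    (hsection : ∀ᵐ a ∂μ, HasSubgaussianMGF (fun b ↦ Ψ (a, b) - ∫ b, Ψ (a, b) ∂ν) C ν) :
    HasSubgaussianMGF (fun p ↦ Ψ p - ∫ p, Ψ p ∂μ.prod ν) ((c / 2) ^ 2 + C) (μ.prod ν) := by
  have hg : AEStronglyMeasurable (fun a ↦ ∫ b, Ψ (a, b) ∂ν) μ :=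
    hΨ.aestronglyMeasurable.integral_prod_right'
  have hmarginal := hasSubgaussianMGF_sub_integral_of_ae_abs_sub_le hg.aemeasurable
    (ae_abs_integral_section_sub_le hΨ hosc)
  have hsum := hasSubgaussianMGF_add_prod hmarginal (hΨ.aestronglyMeasurable.sub hg.comp_fst)
    hsection
  rw [← integral_prod _ hΨ] at hsum
  convert! hsum using 2 with p
  simp

end Product

lemma measurePreserving_finCons {n : ℕ} {Z : Fin (n + 1) → Type*} [∀ i, MeasurableSpace (Z i)]
    (μ : ∀ i, Measure (Z i)) [∀ i, SigmaFinite (μ i)] :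
    MeasurePreserving (fun p : Z 0 × (∀ i : Fin n, Z i.succ) ↦ (Fin.cons p.1 p.2 : ∀ i, Z i))
      ((μ 0).prod (Measure.pi fun i ↦ μ i.succ)) (Measure.pi μ) := by
  have hmeas : Measurable fun p : Z 0 × (∀ i : Fin n, Z i.succ) ↦
      (Fin.cons p.1 p.2 : ∀ i, Z i) :=
    measurable_pi_iff.2 <| Fin.forall_fin_succ.2
      ⟨measurable_fst, fun i ↦ (measurable_pi_apply i).comp measurable_snd⟩
  refine ⟨hmeas, (Measure.pi_eq fun s hs ↦ ?_).symm⟩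
  rw [Measure.map_apply hmeas (.univ_pi hs), Fin.prod_univ_succ, ← Measure.pi_pi,
    ← Measure.prod_prod]
  congr 1 with p
  simp [Fin.forall_fin_succ]

theorem hasSubgaussianMGF_sub_integral_of_ae_abs_update_sub_le {n : ℕ} {Z : Fin n → Type*}
    [∀ i, MeasurableSpace (Z i)] {μ : ∀ i, Measure (Z i)} [∀ i, IsProbabilityMeasure (μ i)]
    {Φ : (∀ i, Z i) → ℝ} (hΦ : Integrable Φ (Measure.pi μ)) {c : Fin n → ℝ≥0}
    (hdiff : ∀ i, ∀ᵐ p ∂(Measure.pi μ).prod (μ i), |Φ (Function.update p.1 i p.2) - Φ p.1| ≤ c i) :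
    HasSubgaussianMGF (fun S ↦ Φ S - ∫ S, Φ S ∂Measure.pi μ) (∑ i, (c i / 2) ^ 2)
      (Measure.pi μ) := by
  induction n with
  | zero =>
    have hzero : (fun S ↦ Φ S - ∫ S, Φ S ∂Measure.pi μ) = fun _ ↦ 0 := by
      ext S
      simp [integral_unique, Unique.eq_default S]
    simp [hzero, HasSubgaussianMGF.fun_zero]
  | succ n ih =>
    have hcons := measurePreserving_finCons μ
    set P := Measure.pi fun i : Fin n ↦ μ i.succ
    set Ψ : Z 0 × (∀ i : Fin n, Z i.succ) → ℝ := fun p ↦ Φ (Fin.cons p.1 p.2)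
    have hΨ : Integrable Ψ ((μ 0).prod P) := hcons.integrable_comp_of_integrable hΦ
    have hdiffΨ (i : Fin (n + 1)) : ∀ᵐ p ∂((μ 0).prod P).prod (μ i),
        |Φ (Function.update (Fin.cons p.1.1 p.1.2) i p.2) - Ψ p.1| ≤ c i :=
      (hcons.prod (MeasurePreserving.id (μ i))).quasiMeasurePreserving.ae (hdiff i)
    have hhead : ∀ᵐ p ∂((μ 0).prod P).prod (μ 0), |Ψ (p.2, p.1.2) - Ψ p.1| ≤ c 0 := by
      simpa only [Fin.update_cons_zero] using hdiffΨ 0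
    have htail : ∀ᵐ a ∂μ 0, ∀ i : Fin n, ∀ᵐ q ∂P.prod (μ i.succ),
        |Ψ (a, Function.update q.1 i q.2) - Ψ (a, q.1)| ≤ c i.succ := by
      refine ae_all_iff.2 fun i ↦ ?_
      have hassoc := (measurePreserving_prodAssoc (μ 0) P (μ i.succ)).symm
      have hdiffΨ' := hassoc.quasiMeasurePreserving.ae (hdiffΨ i.succ)
      simp only [← Fin.cons_update] at hdiffΨ'
      exact Measure.ae_ae_of_ae_prod hdiffΨ'
    have hsection : ∀ᵐ a ∂μ 0, HasSubgaussianMGF (fun b ↦ Ψ (a, b) - ∫ b, Ψ (a, b) ∂P)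
        (∑ i : Fin n, (c i.succ / 2) ^ 2) P := by
      filter_upwards [htail, hΨ.prod_right_ae] with a ha hint using ih hint ha
    have hprod := hasSubgaussianMGF_sub_integral_prod hΨ hhead hsection
    have hident : IdentDistrib Ψ Φ ((μ 0).prod P) (Measure.pi μ) := by
      refine ⟨hΨ.aemeasurable, hΦ.aemeasurable, ?_⟩
      rw [← hcons.map_eq, AEMeasurable.map_map_of_aemeasurable _ hcons.aemeasurable]
      · rfl
      · exact hcons.map_eq ▸ hΦ.aemeasurable
    rw [Fin.sum_univ_succ, ← hident.integral_eq]
    exact hprod.congr_identDistrib (hident.sub_const _)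

theorem ofReal_one_sub_le_measure_pi_of_ae_abs_update_sub_le {n : ℕ} {Z : Fin n → Type*}
    [∀ i, MeasurableSpace (Z i)] {μ : ∀ i, Measure (Z i)} [∀ i, IsProbabilityMeasure (μ i)]
    {Φ : (∀ i, Z i) → ℝ} (hΦ : Integrable Φ (Measure.pi μ)) {c : ℝ≥0}
    (hdiff : ∀ i, ∀ᵐ p ∂(Measure.pi μ).prod (μ i), |Φ (Function.update p.1 i p.2) - Φ p.1| ≤ c)
    {δ : ℝ} (hδ₀ : 0 < δ) (hδ₁ : δ ≤ 1) :
    ENNReal.ofReal (1 - δ) ≤ Measure.pi μ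
      {S | Φ S ≤ ∫ S, Φ S ∂Measure.pi μ + n * c * √(Real.log δ⁻¹ / (2 * n))} := by
  have hsubG := hasSubgaussianMGF_sub_integral_of_ae_abs_update_sub_le hΦ hdiff
  have hradius : √(2 * ↑(∑ _i : Fin n, (c / 2) ^ 2 : ℝ≥0) * Real.log δ⁻¹)
      = n * c * √(Real.log δ⁻¹ / (2 * n)) := by
    rw [← Real.sqrt_sq (by positivity : (0 : ℝ) ≤ n * c), ← Real.sqrt_mul (sq_nonneg _)]
    rcases eq_or_ne n 0 with rfl | hn
    · simp
    · congr 1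
      simp only [Finset.sum_const, Finset.card_univ, Fintype.card_fin, nsmul_eq_mul]
      push_cast
      field_simp
  have htail := ofReal_one_sub_le_measure_of_hasSubgaussianMGF hsubG hδ₀ hδ₁
  simpa only [hradius, sub_le_iff_le_add'] using htail

end BoundedDifferences

section UniformStability

lemma measurePreserving_update {ι : Type*} [Fintype ι] [DecidableEq ι] {Z : ι → Type*}
    [∀ i, MeasurableSpace (Z i)] (μ : ∀ i, Measure (Z i)) [∀ i, SigmaFinite (μ i)] (i : ι)
    [IsProbabilityMeasure (μ i)] :
    MeasurePreserving (fun p : (∀ j, Z j) × Z i ↦ Function.update p.1 i p.2)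
      ((Measure.pi μ).prod (μ i)) (Measure.pi μ) := by
  refine ⟨measurable_update', (Measure.pi_eq fun s hs ↦ ?_).symm⟩
  have hpre : (fun p : (∀ j, Z j) × Z i ↦ Function.update p.1 i p.2) ⁻¹' Set.univ.pi s
      = Set.univ.pi (Function.update s i Set.univ) ×ˢ s i := by
    ext p
    simp only [Set.mem_preimage, Set.mem_prod, Set.mem_univ_pi]
    rw [Function.forall_update_iff p.1 fun j x ↦ x ∈ s j,
      Function.forall_update_iff s fun j t ↦ p.1 j ∈ t]
    simp [and_comm]
  have hrest : ∀ j ∈ Finset.univ.erase i, μ j (Function.update s i Set.univ j) = μ j (s j) :=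
    fun j hj ↦ by rw [Function.update_of_ne (Finset.ne_of_mem_erase hj)]
  rw [Measure.map_apply measurable_update' (.univ_pi hs), hpre, Measure.prod_prod, Measure.pi_pi,
    ← Finset.mul_prod_erase _ _ (Finset.mem_univ i), Function.update_self, measure_univ, one_mul,
    Finset.prod_congr rfl hrest, Finset.prod_erase_mul _ _ (Finset.mem_univ i)]

/-- The gap between the risk and the empirical risk of a learning algorithm under the data
distribution `D`, where `ℓ S z` is the loss at `z` of the predictor learned from the sample `S`. -/
noncomputable def generalizationGap {Z : Type*} [MeasurableSpace Z] {m : ℕ} (D : Measure Z)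
    (ℓ : (Fin m → Z) → Z → ℝ) (S : Fin m → Z) : ℝ :=
  ∫ z, ℓ S z ∂D - (m : ℝ)⁻¹ * ∑ i, ℓ S (S i)

/-- Uniform stability in the sense of Bousquet and Elisseeff, in its replace-one form: exchanging
one training example moves the loss `ℓ S w` of the learned predictor by at most `κ`. All examples
are confined to `G`, which allows for bounds that only hold almost surely. -/
def IsUniformlyStableOn {Z : Type*} {m : ℕ} (G : Set Z) (ℓ : (Fin m → Z) → Z → ℝ) (κ : ℝ) : Prop :=
  ∀ S : Fin m → Z, (∀ j, S j ∈ G) → ∀ i, ∀ z ∈ G, ∀ w ∈ G,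
    |ℓ (Function.update S i z) w - ℓ S w| ≤ κ

lemma IsUniformlyStableOn.abs_sum_train_loss_update_sub_le {Z : Type*} {m : ℕ}
    {ℓ : (Fin m → Z) → Z → ℝ} {G : Set Z} {κ γ : ℝ} (hℓ : IsUniformlyStableOn G ℓ κ)
    (hrange : ∀ S z, ℓ S z ∈ Set.Icc 0 γ) {S : Fin m → Z} (hS : ∀ j, S j ∈ G) (i : Fin m) {z : Z}
    (hz : z ∈ G) :
    |∑ j, ℓ (Function.update S i z) (Function.update S i z j) - ∑ j, ℓ S (S j)|
      ≤ γ + (m - 1) * κ := by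
  have hreplaced : |ℓ (Function.update S i z) (Function.update S i z i) - ℓ S (S i)| ≤ γ :=
    abs_sub_le_of_nonneg_of_le (hrange _ _).1 (hrange _ _).2 (hrange _ _).1 (hrange _ _).2
  have hkept : ∀ j ∈ Finset.univ.erase i,
      |ℓ (Function.update S i z) (Function.update S i z j) - ℓ S (S j)| ≤ κ := fun j hj ↦ by
    rw [Function.update_of_ne (Finset.ne_of_mem_erase hj)]
    exact hℓ S hS i z hz (S j) (hS j)
  rw [← Finset.sum_sub_distrib]
  refine (Finset.abs_sum_le_sum_abs _ _).trans ?_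
  rw [← Finset.add_sum_erase _ _ (Finset.mem_univ i)]
  refine add_le_add hreplaced ((Finset.sum_le_sum hkept).trans_eq ?_)
  simp [Finset.card_erase_of_mem, Nat.cast_pred i.pos]

variable {Z : Type*} [MeasurableSpace Z] {m : ℕ} {D : Measure Z}
  {ℓ : (Fin m → Z) → Z → ℝ} {G : Set Z} {κ γ : ℝ}

lemma integrable_generalizationGap [SigmaFinite D]
    (hint : Integrable (fun p : (Fin m → Z) × Z ↦ ℓ p.1 p.2) ((Measure.pi fun _ ↦ D).prod D))
    (hint_train : ∀ i, Integrable (fun S ↦ ℓ S (S i)) (Measure.pi fun _ ↦ D)) :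
    Integrable (generalizationGap D ℓ) (Measure.pi fun _ ↦ D) :=
  hint.integral_prod_left.sub ((integrable_finsetSum _ fun i _ ↦ hint_train i).const_mul _)

variable [IsProbabilityMeasure D]

lemma ae_forall_mem_and_mem (hG : ∀ᵐ z ∂D, z ∈ G) :
    ∀ᵐ p : (Fin m → Z) × Z ∂(Measure.pi fun _ ↦ D).prod D, (∀ j, p.1 j ∈ G) ∧ p.2 ∈ G := by
  have hpi : ∀ᵐ S : Fin m → Z ∂Measure.pi fun _ ↦ D, ∀ j, S j ∈ G :=
    ae_all_iff.2 fun j ↦ (measurePreserving_eval (fun _ ↦ D) j).quasiMeasurePreserving.ae hG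
  exact (Measure.quasiMeasurePreserving_fst.ae hpi).and (Measure.quasiMeasurePreserving_snd.ae hG)

lemma IsUniformlyStableOn.integral_loss_sub_integral_train_loss_le
    (hℓ : IsUniformlyStableOn G ℓ κ) (hG : ∀ᵐ z ∂D, z ∈ G)
    (hint : Integrable (fun p : (Fin m → Z) × Z ↦ ℓ p.1 p.2) ((Measure.pi fun _ ↦ D).prod D))
    (i : Fin m) (hint_train : Integrable (fun S ↦ ℓ S (S i)) (Measure.pi fun _ ↦ D)) :
    ∫ S, ∫ z, ℓ S z ∂D ∂(Measure.pi fun _ ↦ D) - ∫ S, ℓ S (S i) ∂(Measure.pi fun _ ↦ D) ≤ κ := by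
  have hupd := measurePreserving_update (fun _ : Fin m ↦ D) i
  have hint_upd : Integrable (fun p : (Fin m → Z) × Z ↦ ℓ (Function.update p.1 i p.2) p.2)
      ((Measure.pi fun _ ↦ D).prod D) := by
    simpa [Function.comp_def] using hupd.integrable_comp_of_integrable hint_train
  have htrain : ∫ S, ℓ S (S i) ∂(Measure.pi fun _ ↦ D)
      = ∫ p, ℓ (Function.update p.1 i p.2) p.2 ∂(Measure.pi fun _ ↦ D).prod D := by
    have hmap := integral_map hupd.aemeasurable (f := fun S ↦ ℓ S (S i))
      (by simpa only [hupd.map_eq] using hint_train.aestronglyMeasurable)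
    simpa only [hupd.map_eq, Function.update_self] using hmap
  rw [← integral_prod _ hint, htrain, ← integral_sub hint hint_upd]
  refine (integral_mono_ae (hint.sub hint_upd) (integrable_const κ) ?_).trans_eq (by simp)
  filter_upwards [ae_forall_mem_and_mem hG] with p ⟨hS, hz⟩
  change ℓ p.1 p.2 - ℓ (Function.update p.1 i p.2) p.2 ≤ κ
  linarith [(abs_le.1 (hℓ p.1 hS i p.2 hz p.2 hz)).1]

lemma IsUniformlyStableOn.integral_generalizationGap_le (hm : 0 < m)
    (hℓ : IsUniformlyStableOn G ℓ κ) (hG : ∀ᵐ z ∂D, z ∈ G)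
    (hint : Integrable (fun p : (Fin m → Z) × Z ↦ ℓ p.1 p.2) ((Measure.pi fun _ ↦ D).prod D))
    (hint_train : ∀ i, Integrable (fun S ↦ ℓ S (S i)) (Measure.pi fun _ ↦ D)) :
    ∫ S, generalizationGap D ℓ S ∂(Measure.pi fun _ ↦ D) ≤ κ := by
  set R := ∫ S, ∫ z, ℓ S z ∂D ∂(Measure.pi fun _ ↦ D)
  calc ∫ S, generalizationGap D ℓ S ∂(Measure.pi fun _ ↦ D)
      = R - (m : ℝ)⁻¹ * ∑ i, ∫ S, ℓ S (S i) ∂(Measure.pi fun _ ↦ D) := by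
        unfold generalizationGap
        rw [integral_sub hint.integral_prod_left
          ((integrable_finsetSum _ fun i _ ↦ hint_train i).const_mul _), integral_const_mul,
          integral_finsetSum _ fun i _ ↦ hint_train i]
    _ = (m : ℝ)⁻¹ * ∑ i, (R - ∫ S, ℓ S (S i) ∂(Measure.pi fun _ ↦ D)) := by
        simp only [Finset.sum_sub_distrib, Finset.sum_const, Finset.card_univ, Fintype.card_fin,
          nsmul_eq_mul]
        field_simp
    _ ≤ (m : ℝ)⁻¹ * ∑ _i : Fin m, κ := by
        gcongr with i
        exact hℓ.integral_loss_sub_integral_train_loss_le hG hint i (hint_train i)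
    _ = κ := by
        simp only [Finset.sum_const, Finset.card_univ, Fintype.card_fin, nsmul_eq_mul]
        field_simp

lemma IsUniformlyStableOn.abs_generalizationGap_update_sub_le (hℓ : IsUniformlyStableOn G ℓ κ)
    (hG : ∀ᵐ z ∂D, z ∈ G) (hrange : ∀ S z, ℓ S z ∈ Set.Icc 0 γ) {S : Fin m → Z}
    (hS : ∀ j, S j ∈ G) (i : Fin m) {z : Z} (hz : z ∈ G) (hint : Integrable (ℓ S) D)
    (hint_upd : Integrable (ℓ (Function.update S i z)) D) :
    |generalizationGap D ℓ (Function.update S i z) - generalizationGap D ℓ S|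
      ≤ ((2 * m - 1) * κ + γ) / m := by
  have hrisk : |∫ w, ℓ (Function.update S i z) w ∂D - ∫ w, ℓ S w ∂D| ≤ κ := by
    rw [← integral_sub hint_upd hint]
    have hpt : ∀ᵐ w ∂D, ‖ℓ (Function.update S i z) w - ℓ S w‖ ≤ κ := by
      filter_upwards [hG] with w hw using hℓ S hS i z hz w hw
    simpa using norm_integral_le_of_norm_le_const hpt
  have htrain := hℓ.abs_sum_train_loss_update_sub_le hrange hS i hz
  have hm : (0 : ℝ) < m := mod_cast i.pos
  calc |generalizationGap D ℓ (Function.update S i z) - generalizationGap D ℓ S|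
      = |(∫ w, ℓ (Function.update S i z) w ∂D - ∫ w, ℓ S w ∂D) - (m : ℝ)⁻¹ *
          (∑ j, ℓ (Function.update S i z) (Function.update S i z j) - ∑ j, ℓ S (S j))| := by
        unfold generalizationGap
        ring_nf
    _ ≤ κ + (m : ℝ)⁻¹ * (γ + (m - 1) * κ) := by
        refine (abs_sub _ _).trans (add_le_add hrisk ?_)
        rw [abs_mul, abs_of_pos (inv_pos.2 hm)]
        gcongr
    _ = ((2 * m - 1) * κ + γ) / m := by
        field_simp
        ring

lemma IsUniformlyStableOn.ae_abs_generalizationGap_update_sub_le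
    (hℓ : IsUniformlyStableOn G ℓ κ) (hG : ∀ᵐ z ∂D, z ∈ G) (hrange : ∀ S z, ℓ S z ∈ Set.Icc 0 γ)
    (hint : Integrable (fun p : (Fin m → Z) × Z ↦ ℓ p.1 p.2) ((Measure.pi fun _ ↦ D).prod D))
    (i : Fin m) :
    ∀ᵐ p ∂(Measure.pi fun _ ↦ D).prod D,
      |generalizationGap D ℓ (Function.update p.1 i p.2) - generalizationGap D ℓ p.1|
        ≤ ((2 * m - 1) * κ + γ) / m := by
  have hupd := measurePreserving_update (fun _ : Fin m ↦ D) i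
  filter_upwards [ae_forall_mem_and_mem hG,
    Measure.quasiMeasurePreserving_fst.ae hint.prod_right_ae,
    hupd.quasiMeasurePreserving.ae hint.prod_right_ae] with p ⟨hS, hz⟩ hint_S hint_upd
  exact hℓ.abs_generalizationGap_update_sub_le hG hrange hS i hz hint_S hint_upd

theorem IsUniformlyStableOn.ofReal_one_sub_le_measure_generalizationGap_le (hm : 0 < m)
    (hℓ : IsUniformlyStableOn G ℓ κ) (hG : ∀ᵐ z ∂D, z ∈ G) (hrange : ∀ S z, ℓ S z ∈ Set.Icc 0 γ)
    (hint : Integrable (fun p : (Fin m → Z) × Z ↦ ℓ p.1 p.2) ((Measure.pi fun _ ↦ D).prod D))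
    (hint_train : ∀ i, Integrable (fun S ↦ ℓ S (S i)) (Measure.pi fun _ ↦ D))
    {δ : ℝ} (hδ₀ : 0 < δ) (hδ₁ : δ ≤ 1) :
    ENNReal.ofReal (1 - δ) ≤ (Measure.pi fun _ : Fin m ↦ D)
      {S | generalizationGap D ℓ S
        ≤ κ + ((2 * m - 1) * κ + γ) * √(Real.log δ⁻¹ / (2 * m))} := by
  have hosc := hℓ.ae_abs_generalizationGap_update_sub_le hG hrange hint
  have hmean := hℓ.integral_generalizationGap_le hm hG hint hint_train
  obtain ⟨p, hp⟩ := (hosc ⟨0, hm⟩).exists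
  lift ((2 * m - 1) * κ + γ) / m to NNReal using (abs_nonneg _).trans hp with c hc
  have hc' : (2 * m - 1) * κ + γ = m * c := by
    rw [hc]
    field_simp
  rw [hc']
  exact (ofReal_one_sub_le_measure_pi_of_ae_abs_update_sub_le
    (integrable_generalizationGap hint hint_train) hosc hδ₀ hδ₁).trans
    (measure_mono fun S hS ↦ hS.trans (add_le_add_left hmean _))

end UniformStability

section RegularizedMinimizers

lemma strongConvexOn_add_half_mul_sq_norm {F : Type*} [NormedAddCommGroup F]
    [InnerProductSpace ℝ F] {s : Set F} {f : F → ℝ} (hf : ConvexOn ℝ s f) (lam : ℝ) :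
    StrongConvexOn s lam fun g ↦ f g + lam / 2 * ‖g‖ ^ 2 :=
  strongConvexOn_iff_convex.2 <| by simpa using hf

lemma convexOn_finset_sum {ι 𝕜 E β : Type*} [Semiring 𝕜] [PartialOrder 𝕜] [AddCommMonoid E]
    [SMul 𝕜 E] [AddCommMonoid β] [PartialOrder β] [IsOrderedAddMonoid β] [Module 𝕜 β] {s : Set E}
    (hs : Convex 𝕜 s) {f : ι → E → β} {I : Finset ι} (hf : ∀ i ∈ I, ConvexOn 𝕜 s (f i)) :
    ConvexOn 𝕜 s fun x ↦ ∑ i ∈ I, f i x := by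
  refine ⟨hs, fun x hx y hy a b ha hb hab ↦ ?_⟩
  rw [Finset.smul_sum, Finset.smul_sum, ← Finset.sum_add_distrib]
  exact Finset.sum_le_sum fun i hi ↦ (hf i hi).2 hx hy ha hb hab

section StrongConvexity

variable {E : Type*} [NormedAddCommGroup E] [NormedSpace ℝ E] {s : Set E} {lam : ℝ}

lemma add_half_mul_sq_norm_sub_le_of_strongConvexOn {f : E → ℝ} {x y : E}
    (hf : StrongConvexOn s lam f) (hmin : IsMinOn f s x) (hx : x ∈ s) (hy : y ∈ s) :
    f x + lam / 2 * ‖x - y‖ ^ 2 ≤ f y := by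
  have hsegment : ∀ t ∈ Set.Ioo (0 : ℝ) 1, f x + (1 - t) * (lam / 2 * ‖x - y‖ ^ 2) ≤ f y := by
    rintro t ⟨ht₀, ht₁⟩
    have hle := hf.2 hx hy (sub_nonneg.2 ht₁.le) ht₀.le (sub_add_cancel 1 t)
    have hge := hmin (hf.1 hx hy (sub_nonneg.2 ht₁.le) ht₀.le (sub_add_cancel 1 t))
    simp only [smul_eq_mul, Set.mem_ofPred_eq] at hle hge
    refine le_of_mul_le_mul_left ?_ ht₀
    linarith
  have hlim : Filter.Tendsto (fun t : ℝ ↦ f x + (1 - t) * (lam / 2 * ‖x - y‖ ^ 2))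
      (nhdsWithin 0 (Set.Ioi 0)) (nhds (f x + (1 - 0) * (lam / 2 * ‖x - y‖ ^ 2))) :=
    (Continuous.tendsto (by fun_prop) 0).mono_left nhdsWithin_le_nhds
  simpa using le_of_tendsto hlim
    (Filter.mem_of_superset (Ioo_mem_nhdsGT zero_lt_one) hsegment)

lemma mul_norm_sub_le_of_strongConvexOn {f₁ f₂ : E → ℝ} {x₁ x₂ : E} {K : ℝ}
    (hf₁ : StrongConvexOn s lam f₁) (hf₂ : StrongConvexOn s lam f₂) (hmin₁ : IsMinOn f₁ s x₁)
    (hmin₂ : IsMinOn f₂ s x₂) (hx₁ : x₁ ∈ s) (hx₂ : x₂ ∈ s) (hK : 0 ≤ K)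
    (hsub : |(f₁ x₂ - f₂ x₂) - (f₁ x₁ - f₂ x₁)| ≤ K * ‖x₁ - x₂‖) :
    lam * ‖x₁ - x₂‖ ≤ K := by
  have h₁ := add_half_mul_sq_norm_sub_le_of_strongConvexOn hf₁ hmin₁ hx₁ hx₂
  have h₂ := add_half_mul_sq_norm_sub_le_of_strongConvexOn hf₂ hmin₂ hx₂ hx₁
  rw [norm_sub_rev x₂ x₁] at h₂
  have hsq : lam * ‖x₁ - x₂‖ * ‖x₁ - x₂‖ ≤ K * ‖x₁ - x₂‖ := by
    linarith [(abs_le.1 hsub).2]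
  rcases (norm_nonneg (x₁ - x₂)).eq_or_lt with hzero | hpos
  · simpa [← hzero] using hK
  · exact le_of_mul_le_mul_right hsq hpos

end StrongConvexity

/-- The ridge-regularized empirical risk `g ↦ a ∑ᵢ h (S i) g + (lam/2) ‖g‖²` of a predictor `g`
on the sample `S`, with per-example loss `h` and normalization `a`. -/
noncomputable def ridgeObjective {ι Z F : Type*} [Fintype ι] [NormedAddCommGroup F] (a lam : ℝ)
    (h : Z → F → ℝ) (S : ι → Z) (g : F) : ℝ :=
  a * ∑ i, h (S i) g + lam / 2 * ‖g‖ ^ 2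

lemma ridgeObjective_update_sub {ι Z F : Type*} [Fintype ι] [DecidableEq ι]
    [NormedAddCommGroup F] (a lam : ℝ) (h : Z → F → ℝ) (S : ι → Z) (i : ι) (z : Z) (g : F) :
    ridgeObjective a lam h (Function.update S i z) g - ridgeObjective a lam h S g
      = a * (h z g - h (S i) g) := by
  have hkept : ∑ j ∈ Finset.univ.erase i, h (Function.update S i z j) g
      = ∑ j ∈ Finset.univ.erase i, h (S j) g :=
    Finset.sum_congr rfl fun j hj ↦ by rw [Function.update_of_ne (Finset.ne_of_mem_erase hj)]
  unfold ridgeObjective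
  rw [← Finset.add_sum_erase _ _ (Finset.mem_univ i), hkept, Function.update_self,
    ← Finset.add_sum_erase _ _ (Finset.mem_univ i)]
  ring

variable {ι Z F : Type*} [Fintype ι] [NormedAddCommGroup F] [InnerProductSpace ℝ F] {a lam : ℝ}
  {h : Z → F → ℝ}

lemma strongConvexOn_ridgeObjective (ha : 0 ≤ a) (hconv : ∀ z, ConvexOn ℝ Set.univ (h z))
    (S : ι → Z) : StrongConvexOn Set.univ lam (ridgeObjective a lam h S) :=
  strongConvexOn_add_half_mul_sq_norm
    ((convexOn_finset_sum convex_univ fun i _ ↦ hconv (S i)).smul ha) lam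

lemma mul_norm_sub_le_of_isMinOn_ridgeObjective_update [DecidableEq ι] (ha : 0 ≤ a)
    (hconv : ∀ z, ConvexOn ℝ Set.univ (h z)) {S : ι → Z} {i : ι} {z : Z} {g g' : F}
    (hg : IsMinOn (ridgeObjective a lam h S) Set.univ g)
    (hg' : IsMinOn (ridgeObjective a lam h (Function.update S i z)) Set.univ g') {K : ℝ}
    (hK : 0 ≤ K) (hz : ∀ g₁ g₂, |h z g₁ - h z g₂| ≤ K * ‖g₁ - g₂‖)
    (hSi : ∀ g₁ g₂, |h (S i) g₁ - h (S i) g₂| ≤ K * ‖g₁ - g₂‖) :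
    lam * ‖g' - g‖ ≤ 2 * a * K := by
  refine mul_norm_sub_le_of_strongConvexOn (strongConvexOn_ridgeObjective ha hconv _)
    (strongConvexOn_ridgeObjective ha hconv S) hg' hg (Set.mem_univ _) (Set.mem_univ _)
    (by positivity) ?_
  rw [ridgeObjective_update_sub, ridgeObjective_update_sub, norm_sub_rev]
  calc |a * (h z g - h (S i) g) - a * (h z g' - h (S i) g')|
      = a * |(h z g - h z g') - (h (S i) g - h (S i) g')| := by
        rw [← mul_sub, abs_mul, abs_of_nonneg ha]
        ring_nf
    _ ≤ a * (K * ‖g - g'‖ + K * ‖g - g'‖) := by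
        gcongr
        exact (abs_sub _ _).trans (add_le_add (hz g g') (hSi g g'))
    _ = 2 * a * K * ‖g - g'‖ := by ring

end RegularizedMinimizers

section StructureRegularization

/-- A pair `(x, y)` of `t` feature vectors in `ℝᵈ` and `t` tags. -/
abbrev StructuredSample (d t : ℕ) : Type :=
  (Fin t → EuclideanSpace ℝ (Fin d)) × (Fin t → ℝ)

/-- The structured samples all of whose feature values are bounded by `v`. -/
def featureBounded (d t : ℕ) (v : ℝ) : Set (StructuredSample d t) :=
  {z | ∀ k q, |z.1 k q| ≤ v}

/-- `ρ`-admissibility of an evaluation: predictions are Lipschitz in the function, with constant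
`ρ` times the norm of the summed feature vectors. -/
def IsAdmissible {F : Type*} [NormedAddCommGroup F] {d : ℕ}
    (eval : F → (t : ℕ) → (Fin t → EuclideanSpace ℝ (Fin d)) → Fin t → ℝ) (ρ : ℝ) : Prop :=
  ∀ (g g' : F) (t : ℕ) (x : Fin t → EuclideanSpace ℝ (Fin d)) (k : Fin t),
    |eval g t x k - eval g' t x k| ≤ ρ * ‖g - g'‖ * ‖∑ k', x k'‖

/-- `τ`-smoothness of a point-wise cost, which is a Lipschitz condition in the prediction. -/
def IsSmoothCost (cτ : ℝ → ℝ → ℝ) (τ : ℝ) : Prop :=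
  ∀ y₁ y₂ ystar, |cτ y₁ ystar - cτ y₂ ystar| ≤ τ * |y₁ - y₂|

lemma IsSmoothCost.nonneg {cτ : ℝ → ℝ → ℝ} {τ : ℝ} (hsmooth : IsSmoothCost cτ τ) : 0 ≤ τ := by
  simpa using (abs_nonneg _).trans (hsmooth 1 0 0)

lemma norm_sum_features_le {d t : ℕ} {v : ℝ} {z : StructuredSample d t}
    (hz : z ∈ featureBounded d t v) : ‖∑ k, z.1 k‖ ≤ t * √(d * v ^ 2) := by
  have hfeature (k : Fin t) : ‖z.1 k‖ ≤ √(d * v ^ 2) := by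
    rw [EuclideanSpace.norm_eq]
    refine Real.sqrt_le_sqrt ?_
    calc ∑ q, ‖z.1 k q‖ ^ 2 ≤ ∑ _q : Fin d, v ^ 2 := by
          gcongr with q
          exact hz k q
      _ = d * v ^ 2 := by simp
  simpa using norm_sum_le_of_le Finset.univ fun k _ ↦ hfeature k

variable {F : Type*} {d m α n n' : ℕ}
  {eval : F → (t : ℕ) → (Fin t → EuclideanSpace ℝ (Fin d)) → Fin t → ℝ} {cτ : ℝ → ℝ → ℝ}
  {ρ τ v γ lam : ℝ}

lemma inv_mul_srSampleLoss_mem_Icc (hn : 0 < n) {g : F} {z : StructuredSample d n}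
    (hγ : ∀ k, cτ (eval g n z.1 k) (z.2 k) ∈ Set.Icc 0 γ) :
    1 / (n : ℝ) * srSampleLoss d eval cτ n g z ∈ Set.Icc 0 γ := by
  have hle : srSampleLoss d eval cτ n g z ≤ n * γ := by
    simpa [srSampleLoss] using Finset.sum_le_card_nsmul Finset.univ _ γ fun k _ ↦ (hγ k).2
  refine ⟨mul_nonneg (by positivity) (Finset.sum_nonneg fun k _ ↦ (hγ k).1), ?_⟩
  rw [one_div, inv_mul_le_iff₀ (by positivity)]
  exact hle

lemma generalizationGap_srSampleLoss (D : Measure (StructuredSample d n))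
    (f : (Fin m → StructuredSample d n) → F) (S : Fin m → StructuredSample d n) :
    generalizationGap D (fun S z ↦ 1 / (n : ℝ) * srSampleLoss d eval cτ n (f S) z) S
      = srGenRisk d n eval cτ D (f S) - srEmpRisk d n m eval cτ (f S) S := by
  unfold generalizationGap srGenRisk srEmpRisk
  rw [← Finset.mul_sum, ← mul_assoc, ← one_div, one_div_mul_one_div]

variable [NormedAddCommGroup F]

lemma abs_srSampleLoss_sub_le (hρ : 0 ≤ ρ) (hadm : IsAdmissible eval ρ)
    (hsmooth : IsSmoothCost cτ τ) {t : ℕ} {z : StructuredSample d t}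
    (hz : z ∈ featureBounded d t v) (g g' : F) :
    |srSampleLoss d eval cτ t g z - srSampleLoss d eval cτ t g' z|
      ≤ t ^ 2 * (τ * ρ * √(d * v ^ 2)) * ‖g - g'‖ := by
  have hτ := hsmooth.nonneg
  have hpoint (k : Fin t) : |cτ (eval g t z.1 k) (z.2 k) - cτ (eval g' t z.1 k) (z.2 k)|
      ≤ τ * (ρ * ‖g - g'‖ * (t * √(d * v ^ 2))) := by
    refine (hsmooth _ _ _).trans ?_
    gcongr
    refine (hadm g g' t z.1 k).trans ?_
    gcongr
    exact norm_sum_features_le hz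
  unfold srSampleLoss
  rw [← Finset.sum_sub_distrib]
  refine (Finset.abs_sum_le_sum_abs _ _).trans ((Finset.sum_le_sum fun k _ ↦ hpoint k).trans_eq ?_)
  simp only [Finset.sum_const, Finset.card_univ, Fintype.card_fin, nsmul_eq_mul]
  ring

lemma abs_sum_srSampleLoss_sub_le (hρ : 0 ≤ ρ) (hadm : IsAdmissible eval ρ)
    (hsmooth : IsSmoothCost cτ τ) {z' : Fin α → StructuredSample d n'}
    (hz' : ∀ j, z' j ∈ featureBounded d n' v) (g g' : F) :
    |∑ j, srSampleLoss d eval cτ n' g (z' j) - ∑ j, srSampleLoss d eval cτ n' g' (z' j)|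
      ≤ α * (n' ^ 2 * (τ * ρ * √(d * v ^ 2))) * ‖g - g'‖ := by
  rw [← Finset.sum_sub_distrib]
  refine (Finset.abs_sum_le_sum_abs _ _).trans ((Finset.sum_le_sum fun j _ ↦
    abs_srSampleLoss_sub_le hρ hadm hsmooth (hz' j) g g').trans_eq ?_)
  simp only [Finset.sum_const, Finset.card_univ, Fintype.card_fin, nsmul_eq_mul]
  ring

variable [InnerProductSpace ℝ F]
  {φ : StructuredSample d n → Fin α → StructuredSample d n'}
  {f : (Fin m → StructuredSample d n) → F}

theorem isUniformlyStableOn_structureRegularized (hn : 0 < n) (hdiv : n = α * n') (hρ : 0 ≤ ρ)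
    (hlam : 0 < lam) (hadm : IsAdmissible eval ρ) (hsmooth : IsSmoothCost cτ τ)
    (hconv : ∀ z', ConvexOn ℝ Set.univ fun g : F ↦ srSampleLoss d eval cτ n' g z')
    (hf : ∀ S g, srObjective d n n' α m eval cτ lam φ S (f S)
      ≤ srObjective d n n' α m eval cτ lam φ S g)
    (hφ : ∀ z ∈ featureBounded d n v, ∀ j, φ z j ∈ featureBounded d n' v) :
    IsUniformlyStableOn (featureBounded d n v)
      (fun S z ↦ 1 / (n : ℝ) * srSampleLoss d eval cτ n (f S) z)
      (2 * d * τ ^ 2 * ρ ^ 2 * v ^ 2 * n ^ 2 / (m * lam * α)) := by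
  intro S hS i z hz w hw
  have hm : (0 : ℝ) < m := mod_cast i.pos
  have hα₀ : (α : ℝ) ≠ 0 := mod_cast (left_ne_zero_of_mul (hdiv ▸ hn.ne'))
  have hτ := hsmooth.nonneg
  set B := τ * ρ * √(d * v ^ 2) with hB
  have hB_sq : B ^ 2 = d * τ ^ 2 * ρ ^ 2 * v ^ 2 := by
    rw [hB, mul_pow, Real.sq_sqrt (by positivity)]
    ring
  have hLip (z : StructuredSample d n) (hz : z ∈ featureBounded d n v) :=
    abs_sum_srSampleLoss_sub_le hρ hadm hsmooth (hφ z hz)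
  have hminimizer : lam * ‖f (Function.update S i z) - f S‖
      ≤ 2 * (1 / (m * n)) * (α * (n' ^ 2 * B)) :=
    mul_norm_sub_le_of_isMinOn_ridgeObjective_update (by positivity)
      (fun z ↦ convexOn_finset_sum convex_univ fun j _ ↦ hconv (φ z j))
      (fun g _ ↦ hf S g) (fun g _ ↦ hf (Function.update S i z) g) (by positivity)
      (hLip z hz) (hLip (S i) (hS i))
  rw [← mul_sub, abs_mul, abs_of_pos (by positivity)]
  calc 1 / (n : ℝ) * |srSampleLoss d eval cτ n (f (Function.update S i z)) w
        - srSampleLoss d eval cτ n (f S) w|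
      ≤ 1 / n * (n ^ 2 * B * ‖f (Function.update S i z) - f S‖) := by
        gcongr
        exact abs_srSampleLoss_sub_le hρ hadm hsmooth hw _ _
    _ = n * B / lam * (lam * ‖f (Function.update S i z) - f S‖) := by field_simp
    _ ≤ n * B / lam * (2 * (1 / (m * n)) * (α * (n' ^ 2 * B))) := by gcongr
    _ = 2 * B ^ 2 * n ^ 2 / (m * lam * α) := by
        rw [hdiv, Nat.cast_mul]
        field_simp
    _ = 2 * d * τ ^ 2 * ρ ^ 2 * v ^ 2 * n ^ 2 / (m * lam * α) := by
        rw [hB_sq]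
        ring

theorem generalization_vs_structure_regularization_general (hm : 0 < m) (hn : 0 < n)
    (hdiv : n = α * n') (hρ : 0 ≤ ρ) (hlam : 0 < lam) (hadm : IsAdmissible eval ρ)
    (hsmooth : IsSmoothCost cτ τ)
    (hconv : ∀ z', ConvexOn ℝ Set.univ fun g : F ↦ srSampleLoss d eval cτ n' g z')
    {D : Measure (StructuredSample d n)} [IsProbabilityMeasure D]
    (hf : ∀ S g, srObjective d n n' α m eval cτ lam φ S (f S)
      ≤ srObjective d n n' α m eval cτ lam φ S g)
    (hD : ∀ᵐ z ∂D, z ∈ featureBounded d n v)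
    (hφ : ∀ z ∈ featureBounded d n v, ∀ j, φ z j ∈ featureBounded d n' v)
    (hγ : ∀ S (z : StructuredSample d n) (k : Fin n),
      cτ (eval (f S) n z.1 k) (z.2 k) ∈ Set.Icc 0 γ)
    (hint : Integrable (fun p : (Fin m → StructuredSample d n) × StructuredSample d n ↦
      srSampleLoss d eval cτ n (f p.1) p.2) ((Measure.pi fun _ ↦ D).prod D))
    (hint_train : ∀ i, Integrable (fun S ↦ srSampleLoss d eval cτ n (f S) (S i))
      (Measure.pi fun _ ↦ D)) {δ : ℝ} (hδ : δ ∈ Set.Ioo 0 1) :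
    ENNReal.ofReal (1 - δ) ≤ (Measure.pi fun _ : Fin m ↦ D)
      {S | srGenRisk d n eval cτ D (f S) ≤ srEmpRisk d n m eval cτ (f S) S
        + 2 * d * τ ^ 2 * ρ ^ 2 * v ^ 2 * n ^ 2 / (m * lam * α)
        + ((4 * m - 2) * d * τ ^ 2 * ρ ^ 2 * v ^ 2 * n ^ 2 / (m * lam * α) + γ)
          * √(Real.log δ⁻¹ / (2 * m))} := by
  have hstable := isUniformlyStableOn_structureRegularized hn hdiv hρ hlam hadm hsmooth hconv hf hφ
  refine (hstable.ofReal_one_sub_le_measure_generalizationGap_le hm hD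
    (fun S z ↦ inv_mul_srSampleLoss_mem_Icc hn (hγ S z)) (hint.const_mul _)
    (fun i ↦ (hint_train i).const_mul _) hδ.1 hδ.2.le).trans (measure_mono fun S hS ↦ ?_)
  rw [Set.mem_ofPred_eq, generalizationGap_srSampleLoss, sub_le_iff_le_add'] at hS
  refine hS.trans_eq ?_
  ring

end StructureRegularization

/-- **Theorem 4 (Generalization vs. structure regularization).**
Let `f S` be a minimizer of the structure-regularized and `L₂`-weight-
regularized objective built from the training set `S` of `m` i.i.d. samples of
structure complexity `n = α n'`, each decomposed by the fixed map `φ` into `α`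
mini-samples of structure complexity `n'`, so that the induced learning
algorithm `S ↦ f S` is symmetric (and `fminus S i` is a minimizer of the
objective with all mini-samples of the `i`-th sample removed).  Assume the
sample-wise losses are convex and differentiable in `g`, the point-wise cost
is convex and `τ`-smooth with `0 ≤ ℓ_τ(f S, z, k) ≤ γ`, the evaluation is
`ρ`-admissible, and every feature value is bounded by `v` (`D`-almost surely,
and preserved by the decomposition `φ`).  Then for any `δ ∈ (0,1)`, with
probability at least `1 − δ` over the random draw of `S`,
`R(f) ≤ R_e(f) + 2dτ²ρ²v²n²/(mλα)
  + ((4m−2)dτ²ρ²v²n²/(mλα) + γ)√(ln(1/δ)/(2m))`. -/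
theorem generalization_vs_structure_regularization
    {F : Type*} [NormedAddCommGroup F] [InnerProductSpace ℝ F]
    (d m α n n' : ℕ) (hm : 0 < m) (hα : 0 < α) (hn : 0 < n)
    (hdiv : n = α * n')
    (eval : F → (t : ℕ) → (Fin t → EuclideanSpace ℝ (Fin d)) → Fin t → ℝ)
    (ρ τ v γ lam : ℝ) (hρ : 0 ≤ ρ) (hlam : 0 < lam)
    (hadm : ∀ (g g' : F) (t : ℕ) (x : Fin t → EuclideanSpace ℝ (Fin d)) (k : Fin t),
      |eval g t x k - eval g' t x k| ≤ ρ * ‖g - g'‖ * ‖∑ k', x k'‖)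
    (cτ : ℝ → ℝ → ℝ)
    (hsmooth : ∀ y₁ y₂ ystar : ℝ, |cτ y₁ ystar - cτ y₂ ystar| ≤ τ * |y₁ - y₂|)
    (hcost_convex : ∀ ystar : ℝ, ConvexOn ℝ Set.univ (fun y : ℝ => cτ y ystar))
    (hconv : ∀ z' : (Fin n' → EuclideanSpace ℝ (Fin d)) × (Fin n' → ℝ),
      ConvexOn ℝ Set.univ (fun g : F => srSampleLoss d eval cτ n' g z'))
    (hdiff : ∀ z' : (Fin n' → EuclideanSpace ℝ (Fin d)) × (Fin n' → ℝ),
      Differentiable ℝ (fun g : F => srSampleLoss d eval cτ n' g z'))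
    (D : Measure ((Fin n → EuclideanSpace ℝ (Fin d)) × (Fin n → ℝ)))
    [IsProbabilityMeasure D]
    (φ : (Fin n → EuclideanSpace ℝ (Fin d)) × (Fin n → ℝ) →
      Fin α → (Fin n' → EuclideanSpace ℝ (Fin d)) × (Fin n' → ℝ))
    (f : (Fin m → (Fin n → EuclideanSpace ℝ (Fin d)) × (Fin n → ℝ)) → F)
    (hf : ∀ (S : Fin m → (Fin n → EuclideanSpace ℝ (Fin d)) × (Fin n → ℝ)) (g : F),
      srObjective d n n' α m eval cτ lam φ S (f S)
        ≤ srObjective d n n' α m eval cτ lam φ S g)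
    (hsym : ∀ (S : Fin m → (Fin n → EuclideanSpace ℝ (Fin d)) × (Fin n → ℝ))
      (σ : Equiv.Perm (Fin m)), f (S ∘ σ) = f S)
    (fminus : (Fin m → (Fin n → EuclideanSpace ℝ (Fin d)) × (Fin n → ℝ)) → Fin m → F)
    (hfminus : ∀ (S : Fin m → (Fin n → EuclideanSpace ℝ (Fin d)) × (Fin n → ℝ))
      (i : Fin m) (g : F),
      srObjectiveMinus d n n' α m eval cτ lam φ S i (fminus S i)
        ≤ srObjectiveMinus d n n' α m eval cτ lam φ S i g)
    (hconsist : ∀ (S : Fin m → (Fin n → EuclideanSpace ℝ (Fin d)) × (Fin n → ℝ))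
      (i : Fin m) (z : (Fin n → EuclideanSpace ℝ (Fin d)) × (Fin n → ℝ)),
      fminus (Function.update S i z) i = fminus S i)
    (hboundD : ∀ᵐ z ∂D, ∀ (k : Fin n) (q : Fin d), |z.1 k q| ≤ v)
    (hφbound : ∀ z : (Fin n → EuclideanSpace ℝ (Fin d)) × (Fin n → ℝ),
      (∀ (k : Fin n) (q : Fin d), |z.1 k q| ≤ v) →
      ∀ (j : Fin α) (k : Fin n') (q : Fin d), |(φ z j).1 k q| ≤ v)
    (hγ : ∀ (S : Fin m → (Fin n → EuclideanSpace ℝ (Fin d)) × (Fin n → ℝ))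
      (z : (Fin n → EuclideanSpace ℝ (Fin d)) × (Fin n → ℝ)) (k : Fin n),
      0 ≤ cτ (eval (f S) n z.1 k) (z.2 k) ∧ cτ (eval (f S) n z.1 k) (z.2 k) ≤ γ)
    (hInt1 : Integrable
      (fun p : (Fin m → (Fin n → EuclideanSpace ℝ (Fin d)) × (Fin n → ℝ)) ×
          ((Fin n → EuclideanSpace ℝ (Fin d)) × (Fin n → ℝ)) =>
        srSampleLoss d eval cτ n (f p.1) p.2)
      ((Measure.pi fun _ : Fin m => D).prod D))
    (hInt2 : ∀ i : Fin m, Integrable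
      (fun p : (Fin m → (Fin n → EuclideanSpace ℝ (Fin d)) × (Fin n → ℝ)) ×
          ((Fin n → EuclideanSpace ℝ (Fin d)) × (Fin n → ℝ)) =>
        srSampleLoss d eval cτ n (f (Function.update p.1 i p.2)) p.2)
      ((Measure.pi fun _ : Fin m => D).prod D))
    (hInt3 : ∀ j : Fin m, Integrable
      (fun S : Fin m → (Fin n → EuclideanSpace ℝ (Fin d)) × (Fin n → ℝ) =>
        srSampleLoss d eval cτ n (f S) (S j))
      (Measure.pi fun _ : Fin m => D))
    (hIntR : Integrable
      (fun S : Fin m → (Fin n → EuclideanSpace ℝ (Fin d)) × (Fin n → ℝ) =>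
        srGenRisk d n eval cτ D (f S))
      (Measure.pi fun _ : Fin m => D))
    (hIntG : ∀ S : Fin m → (Fin n → EuclideanSpace ℝ (Fin d)) × (Fin n → ℝ),
      Integrable (fun z => srSampleLoss d eval cτ n (f S) z) D)
    (hIntGm : ∀ (S : Fin m → (Fin n → EuclideanSpace ℝ (Fin d)) × (Fin n → ℝ))
      (i : Fin m),
      Integrable (fun z => srSampleLoss d eval cτ n (fminus S i) z) D)
    (hmeas : Measurable
      (fun S : Fin m → (Fin n → EuclideanSpace ℝ (Fin d)) × (Fin n → ℝ) =>
        srGenRisk d n eval cτ D (f S) - srEmpRisk d n m eval cτ (f S) S)) :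
    ∀ δ : ℝ, δ ∈ Set.Ioo (0 : ℝ) 1 →
      ENNReal.ofReal (1 - δ) ≤
        (Measure.pi fun _ : Fin m => D)
          {S | srGenRisk d n eval cτ D (f S)
            ≤ srEmpRisk d n m eval cτ (f S) S
              + 2 * (d : ℝ) * τ ^ 2 * ρ ^ 2 * v ^ 2 * (n : ℝ) ^ 2 / ((m : ℝ) * lam * (α : ℝ))
              + ((4 * (m : ℝ) - 2) * (d : ℝ) * τ ^ 2 * ρ ^ 2 * v ^ 2 * (n : ℝ) ^ 2
                    / ((m : ℝ) * lam * (α : ℝ)) + γ)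
                * Real.sqrt (Real.log δ⁻¹ / (2 * (m : ℝ)))} := by
  intro δ hδ
  exact generalization_vs_structure_regularization_general hm hn hdiv hρ hlam hadm hsmooth hconv hf
    hboundD hφbound hγ hInt1 hInt3 hδ
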